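/- Let A be a Noetherian integral domain such that (𝔞 ∩ 𝔟)(𝔞 + 𝔟) = 𝔞𝔟 for every pair of ideals 𝔞, 𝔟 of A. Then every nonzero proper ideal of A is a product of finitely many prime ideals of A. -/

import Mathlib

/-!
The identity `(𝔞 ⊓ 𝔟) * (𝔞 + 𝔟) = 𝔞 * 𝔟` exhibits `𝔞 + 𝔟` as a factor of `𝔞 * 𝔟`, so `𝔞 + 𝔟` is
invertible as soon as `𝔞` and `𝔟` are. Nonzero principal ideals of a domain are invertible, hence so
is every nonzero finitely generated ideal. In the Noetherian case this covers all nonzero ideals, so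
the ring is a Dedekind domain, where nonzero ideals factor into primes.
-/

open scoped nonZeroDivisors
open UniqueFactorizationMonoid

section Invertibility

variable {R : Type*} [CommRing R]

lemma isUnit_coeIdeal_sup {S : Submonoid R} {P : Type*} [CommRing P] [Algebra R P]
    {I J : Ideal R} (h : (I ⊓ J) * (I ⊔ J) = I * J)
    (hI : IsUnit (I : FractionalIdeal S P)) (hJ : IsUnit (J : FractionalIdeal S P)) :
    IsUnit ((I ⊔ J : Ideal R) : FractionalIdeal S P) := by
  have hIJ := hI.mul hJ
  rw [← FractionalIdeal.coeIdeal_mul, ← h, FractionalIdeal.coeIdeal_mul] at hIJ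
  exact isUnit_of_mul_isUnit_right hIJ

variable (K : Type*) [Field K] [Algebra R K] [IsFractionRing R K]

lemma isUnit_coeIdeal_span_singleton [IsDomain R] {x : R} (hx : x ≠ 0) :
    IsUnit ((Ideal.span {x} : Ideal R) : FractionalIdeal R⁰ K) :=
  (FractionalIdeal.mul_inv_cancel_iff_isUnit K).mp
    (FractionalIdeal.coe_ideal_span_singleton_mul_inv K hx)

lemma isUnit_coeIdeal_of_fg [IsDomain R]
    (h : ∀ I J : Ideal R, I.FG → J.FG → (I ⊓ J) * (I ⊔ J) = I * J)
    {I : Ideal R} (hfg : I.FG) (hI : I ≠ ⊥) : IsUnit (I : FractionalIdeal R⁰ K) := by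
  induction I, hfg using Submodule.fg_induction with
  | singleton x => exact isUnit_coeIdeal_span_singleton K fun hx => hI (by simp [hx])
  | sup I J hIfg hJfg ihI ihJ =>
    rcases eq_or_ne I ⊥ with rfl | hI₀
    · rw [bot_sup_eq] at hI ⊢
      exact ihJ hI
    rcases eq_or_ne J ⊥ with rfl | hJ₀
    · rw [sup_bot_eq] at hI ⊢
      exact ihI hI
    exact isUnit_coeIdeal_sup (h I J hIfg hJfg) (ihI hI₀) (ihJ hJ₀)

lemma isDedekindDomain_of_isUnit_coeIdeal [IsDomain R]
    (h : ∀ I : Ideal R, I ≠ ⊥ → IsUnit (I : FractionalIdeal R⁰ (FractionRing R))) :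
    IsDedekindDomain R :=
  (isDedekindDomain_iff_mul_inv_cancel (K := FractionRing R)).mpr fun I hI =>
    (FractionalIdeal.mul_inv_cancel_iff_isUnit _).mpr <|
      FractionalIdeal.isUnit_num.mp <| h I.num <| by
        rwa [Ne, ← Ideal.zero_eq_bot, FractionalIdeal.num_eq_zero_iff]

end Invertibility

lemma exists_list_isPrime_prod_eq {R : Type*} [CommRing R] [IsDedekindDomain R] {I : Ideal R}
    (hI : I ≠ ⊥) : ∃ l : List (Ideal R), (∀ P ∈ l, P.IsPrime) ∧ l.prod = I :=
  ⟨(normalizedFactors I).toList,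
    fun P hP => Ideal.isPrime_of_prime (prime_of_normalized_factor P (Multiset.mem_toList.mp hP)),
    by rw [Multiset.prod_toList, Ideal.prod_normalizedFactors_eq_self hI]⟩

theorem statement8 {A : Type*} [CommRing A] [IsDomain A] [IsNoetherianRing A]
    (h : ∀ a b : Ideal A, (a ⊓ b) * (a + b) = a * b) :
    ∀ I : Ideal A, I ≠ ⊥ → I ≠ ⊤ →
      ∃ (m : ℕ) (p : Fin m → Ideal A), 1 ≤ m ∧ (∀ i, (p i).IsPrime) ∧ I = ∏ i, p i := by
  intro I hI hI_top
  have : IsDedekindDomain A := isDedekindDomain_of_isUnit_coeIdeal fun J hJ =>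
    isUnit_coeIdeal_of_fg _ (fun a b _ _ => h a b) (IsNoetherian.noetherian J) hJ
  obtain ⟨l, hl_prime, rfl⟩ := exists_list_isPrime_prod_eq hI
  have hl_ne_nil : l ≠ [] := by
    rintro rfl
    exact hI_top Ideal.one_eq_top
  exact ⟨l.length, fun i => l[i], List.length_pos_iff.mpr hl_ne_nil,
    fun i => hl_prime _ (List.getElem_mem _), (Fin.prod_univ_getElem l).symm⟩
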